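/- For all natural numbers l₁, l₂, l₃ and every real number E, the following identity holds: ∑_{r=0}^{l₁} ∑_{s=0}^{l₂} ∑_{t=0}^{l₃} (-1)^{l₁+l₂-s} · C(E+l₁+s+l₃-t-1, l₃-t) · C(E+r+s-1, s) · C(E+l₂+r+t-1, t) · C(E+r+s-1, r) · C(E+l₁-r+l₂-s+l₃-1, l₁-r) · C(E+l₃+l₂-s-1, l₂-s) = ∑_{r=0}^{l₁} ∑_{s=0}^{l₂} ∑_{t=0}^{l₃} (-1)^{l₁+l₂-s} · C(E+l₁+s+l₃-t-1, l₃-t) · C(E+l₁+s-1, s) · C(E+l₂-s+t-1, t) · C(E+l₂+t+r-1, r) · C(E+l₁-r+l₂-s+l₃-1, l₁-r) · C(E+t+l₂-s-1, l₂-s). -/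

import Mathlib

/-- Generalized binomial coefficient `C(x, m) = x(x-1)⋯(x-m+1)/m!` for a real
number `x` and a natural number `m`. -/
noncomputable def gbinom (x : ℝ) (m : ℕ) : ℝ :=
  (∏ i ∈ Finset.range m, (x - i)) / m.factorial


/-- Rising factorial. -/
noncomputable def risingQ (x : ℝ) (m : ℕ) : ℝ := ∏ i ∈ Finset.range m, (x + i)

theorem gbinom_succ (x : ℝ) (m : ℕ) :
    ((m : ℝ) + 1) * gbinom x (m + 1) = (x - m) * gbinom x m := by
  unfold gbinom
  rw [Finset.prod_range_succ, Nat.factorial_succ]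
  have : (m.factorial : ℝ) ≠ 0 := by positivity
  push_cast
  field_simp

theorem gbinom_vandermonde (x y : ℝ) (n : ℕ) :
    gbinom (x + y) n = ∑ p ∈ Finset.HasAntidiagonal.antidiagonal n, gbinom x p.1 * gbinom y p.2 := by
  induction n with
  | zero => simp [gbinom]
  | succ n ih =>
    have h1 := gbinom_succ (x + y) n
    have hn : ((n : ℝ) + 1) ≠ 0 := by positivity
    apply mul_left_cancel₀ hn
    rw [h1, ih, Finset.mul_sum, Finset.mul_sum]
    have e1 : ∑ p ∈ Finset.HasAntidiagonal.antidiagonal (n + 1), ((n : ℝ) + 1) * (gbinom x p.1 * gbinom y p.2)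
        = ∑ p ∈ Finset.HasAntidiagonal.antidiagonal (n + 1), ((p.1 : ℝ) * gbinom x p.1) * gbinom y p.2
        + ∑ p ∈ Finset.HasAntidiagonal.antidiagonal (n + 1), gbinom x p.1 * ((p.2 : ℝ) * gbinom y p.2) := by
      rw [← Finset.sum_add_distrib]
      refine Finset.sum_congr rfl fun p hp => ?_
      have : ((p.1 : ℝ) + p.2) = n + 1 := by exact_mod_cast Finset.HasAntidiagonal.mem_antidiagonal.1 hp
      rw [← this]; ring
    rw [e1, Finset.Nat.sum_antidiagonal_succ, Finset.Nat.sum_antidiagonal_succ']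
    simp only [Nat.cast_zero, zero_mul, mul_zero, zero_add, Nat.cast_add, Nat.cast_one,
      gbinom_succ]
    rw [← Finset.sum_add_distrib]
    refine Finset.sum_congr rfl fun p hp => ?_
    have : ((p.1 : ℝ) + p.2) = n := by exact_mod_cast Finset.HasAntidiagonal.mem_antidiagonal.1 hp
    rw [← this]; ring

theorem risingQ_add (x : ℝ) (m n : ℕ) :
    risingQ x (m + n) = risingQ x m * risingQ (x + m) n := by
  unfold risingQ
  rw [Finset.prod_range_add]
  congr 1
  refine Finset.prod_congr rfl fun i _ => ?_
  push_cast; ring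

theorem gbinom_rising (x z : ℝ) (m : ℕ) (h : z = x + m - 1) :
    gbinom z m = risingQ x m / m.factorial := by
  subst h
  unfold gbinom risingQ
  congr 1
  rw [← Finset.prod_range_reflect]
  refine Finset.prod_congr rfl fun i hi => ?_
  have : i < m := Finset.mem_range.1 hi
  rw [Nat.cast_sub (by omega), Nat.cast_sub (by omega)]
  push_cast; ring

theorem gbinom_neg (x : ℝ) (m : ℕ) :
    gbinom (-x) m = (-1) ^ m * (risingQ x m / m.factorial) := by
  unfold gbinom risingQ
  rw [← mul_div_assoc]
  congr 1
  have : ((-1 : ℝ)) ^ m = ∏ _i ∈ Finset.range m, (-1 : ℝ) := by simp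
  rw [this, ← Finset.prod_mul_distrib]
  refine Finset.prod_congr rfl fun i _ => ?_
  ring

theorem rising_vandermonde (x y : ℝ) (n : ℕ) :
    risingQ (x + y) n / n.factorial = ∑ p ∈ Finset.HasAntidiagonal.antidiagonal n,
      (risingQ x p.1 / p.1.factorial) * (risingQ y p.2 / p.2.factorial) := by
  have h := gbinom_vandermonde (-x) (-y) n
  rw [← neg_add, gbinom_neg] at h
  have h2 : ((-1 : ℝ)) ^ n ≠ 0 := by simp
  apply mul_left_cancel₀ h2
  rw [h, Finset.mul_sum]
  refine Finset.sum_congr rfl fun p hp => ?_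
  rw [gbinom_neg, gbinom_neg, ← Finset.HasAntidiagonal.mem_antidiagonal.1 hp, pow_add]
  ring

theorem gbinom_natCast (m i : ℕ) :
    gbinom (m : ℝ) i = (m.descFactorial i : ℝ) / i.factorial := by
  unfold gbinom
  congr 1
  induction i with
  | zero => simp
  | succ i ih =>
    rw [Finset.prod_range_succ, ih, Nat.descFactorial_succ]
    by_cases h : i ≤ m
    · push_cast [Nat.cast_sub h]; ring
    · rw [Nat.descFactorial_eq_zero_iff_lt.2 (by omega)]; simp

theorem expand_one (E : ℝ) (l r s : ℕ) :
    (l.descFactorial r : ℝ) * (risingQ (E + l) s / s.factorial) =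
      ∑ p ∈ Finset.HasAntidiagonal.antidiagonal s, (l.descFactorial (r + p.2) : ℝ) *
        risingQ (E + r + p.2) p.1 / (p.1.factorial * p.2.factorial) := by
  by_cases h : r ≤ l
  · rw [← gbinom_rising (E + l) ((E + r + s - 1) + ((l - r : ℕ) : ℝ)) s
      (by push_cast [Nat.cast_sub h]; ring), gbinom_vandermonde, Finset.mul_sum]
    refine Finset.sum_congr rfl fun p hp => ?_
    have hp' := Finset.HasAntidiagonal.mem_antidiagonal.1 hp
    rw [gbinom_natCast, gbinom_rising (E + r + p.2) _ p.1 (by rw [← hp']; push_cast; ring)]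
    have : (l.descFactorial (r + p.2)) = l.descFactorial r * (l - r).descFactorial p.2 := by
      rw [mul_comm, ← Nat.descFactorial_mul_descFactorial (Nat.le_add_right r p.2), Nat.add_sub_cancel_left]
    rw [this]
    push_cast
    field_simp
  · rw [Nat.descFactorial_eq_zero_iff_lt.2 (by omega)]
    symm
    simp only [Nat.cast_zero, zero_mul]
    refine Finset.sum_eq_zero fun p _ => ?_
    rw [Nat.descFactorial_eq_zero_iff_lt.2 (by omega)]; simp

theorem sum_box (N : ℕ) (h : ℕ → ℕ → ℝ) (h0 : ∀ a k, N ≤ a + k → h a k = 0) :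
    ∑ r ∈ Finset.range N, ∑ p ∈ Finset.HasAntidiagonal.antidiagonal r, h p.1 p.2 =
      ∑ a ∈ Finset.range N, ∑ k ∈ Finset.range N, h a k := by
  rw [← Finset.sum_product', Finset.sum_sigma']
  refine Finset.sum_bij_ne_zero (fun x _ _ => x.2) ?_ ?_ ?_ ?_
  · rintro ⟨r, a, k⟩ hx _
    simp at hx ⊢
    omega
  · rintro ⟨r, a, k⟩ hx _ ⟨r', a', k'⟩ hx' _ he
    simp at hx hx' he
    obtain ⟨rfl, rfl⟩ := he
    obtain ⟨_, rfl⟩ := hx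
    obtain ⟨_, rfl⟩ := hx'
    rfl
  · rintro ⟨a, k⟩ hx hne
    refine ⟨⟨a + k, a, k⟩, ?_, hne, rfl⟩
    simp
    by_contra hc
    exact hne (h0 a k (by omega))
  · intros; rfl

theorem alt_sum (n : ℕ) :
    ∑ p ∈ Finset.HasAntidiagonal.antidiagonal n, ((-1 : ℝ)) ^ p.1 / (p.1.factorial * p.2.factorial) =
      if n = 0 then 1 else 0 := by
  have h := gbinom_vandermonde (-1) (1 : ℝ) n
  have h2 : ((n.factorial : ℝ)) ≠ 0 := by positivity
  have key : (n.factorial : ℝ) *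
      ∑ p ∈ Finset.HasAntidiagonal.antidiagonal n, ((-1 : ℝ)) ^ p.1 / (p.1.factorial * p.2.factorial)
      = (-1 + 1) ^ n := by
    rw [(Commute.all (-1 : ℝ) 1).add_pow', Finset.mul_sum]
    refine Finset.sum_congr rfl fun p hp => ?_
    have hp' := Finset.HasAntidiagonal.mem_antidiagonal.1 hp
    have hc : (n.choose p.1 : ℝ) * p.1.factorial * p.2.factorial = n.factorial := by
      rw [← hp']; rw [Nat.choose_symm_add]; exact_mod_cast Nat.add_choose_mul_factorial_mul_factorial p.1 p.2
    rw [← hc]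
    simp only [one_pow, mul_one, nsmul_eq_mul]
    field_simp
  apply mul_left_cancel₀ h2
  rw [key]
  split_ifs with h
  · subst h; simp
  · simp [h]

theorem key_identity (E : ℝ) (l₁ l₂ N : ℕ) (hN : l₁ + l₂ < N) (w : ℕ → ℝ) :
    ∑ r ∈ Finset.range N, ∑ s ∈ Finset.range N, (-1 : ℝ) ^ s *
      ((l₁.descFactorial r : ℝ) * (risingQ (E + l₁) s / s.factorial)) *
      ((l₂.descFactorial s : ℝ) * (risingQ (E + l₂) r / r.factorial)) * w (r + s) =
    ∑ r ∈ Finset.range N, ∑ s ∈ Finset.range N, (-1 : ℝ) ^ s *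
      ((l₁.descFactorial r : ℝ) * (risingQ (E + r) s / s.factorial)) *
      ((l₂.descFactorial s : ℝ) * (risingQ (E + s) r / r.factorial)) * w (r + s) := by
  set g : ℕ → ℕ → ℕ → ℝ := fun a b n => (-1 : ℝ) ^ b * (l₁.descFactorial (a + n) : ℝ) *
    (l₂.descFactorial (b + n) : ℝ) * risingQ (E + a + n) b * risingQ (E + b + n) a /
    (a.factorial * b.factorial) * w (a + b + n) with hg
  have g1 : ∀ a b n, l₁ < a + n → g a b n = 0 := by
    intro a b n h
    simp [hg, Nat.descFactorial_eq_zero_iff_lt.2 h]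
  have g2 : ∀ a b n, l₂ < b + n → g a b n = 0 := by
    intro a b n h
    simp [hg, Nat.descFactorial_eq_zero_iff_lt.2 h]
  set c : ℕ → ℕ → ℝ := fun i k => (-1 : ℝ) ^ i / (i.factorial * k.factorial) with hc
  have step1 : ∀ r s : ℕ, (-1 : ℝ) ^ s *
      ((l₁.descFactorial r : ℝ) * (risingQ (E + l₁) s / s.factorial)) *
      ((l₂.descFactorial s : ℝ) * (risingQ (E + l₂) r / r.factorial)) * w (r + s) =
      ∑ p ∈ Finset.HasAntidiagonal.antidiagonal r, ∑ q ∈ Finset.HasAntidiagonal.antidiagonal s,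
        g p.1 q.1 (q.2 + p.2) * c q.2 p.2 := by
    intro r s
    rw [expand_one, expand_one, mul_assoc (_ ^ s), Finset.sum_mul_sum, Finset.sum_comm,
      Finset.mul_sum, Finset.sum_mul]
    refine Finset.sum_congr rfl fun p hp => ?_
    rw [Finset.mul_sum, Finset.sum_mul]
    refine Finset.sum_congr rfl fun q hq => ?_
    have hp' := Finset.HasAntidiagonal.mem_antidiagonal.1 hp
    have hq' := Finset.HasAntidiagonal.mem_antidiagonal.1 hq
    obtain ⟨a, k⟩ := p
    obtain ⟨b, i⟩ := q
    simp only at hp' hq' ⊢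
    subst hp' hq'
    simp only [hg, hc]
    rw [show a + k + i = a + (i + k) by ring, show b + i + k = b + (i + k) by ring,
      show a + k + (b + i) = a + b + (i + k) by ring,
      show E + ((a + k : ℕ) : ℝ) + i = E + a + ((i + k : ℕ) : ℝ) by push_cast; ring,
      show E + ((b + i : ℕ) : ℝ) + k = E + b + ((i + k : ℕ) : ℝ) by push_cast; ring, pow_add]
    field_simp
  have step2 : ∑ r ∈ Finset.range N, ∑ s ∈ Finset.range N,
      ∑ p ∈ Finset.HasAntidiagonal.antidiagonal r, ∑ q ∈ Finset.HasAntidiagonal.antidiagonal s,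
        g p.1 q.1 (q.2 + p.2) * c q.2 p.2 =
      ∑ a ∈ Finset.range N, ∑ b ∈ Finset.range N, g a b 0 := by
    have e1 : ∀ r, ∑ s ∈ Finset.range N,
        ∑ p ∈ Finset.HasAntidiagonal.antidiagonal r, ∑ q ∈ Finset.HasAntidiagonal.antidiagonal s,
          g p.1 q.1 (q.2 + p.2) * c q.2 p.2 =
        ∑ p ∈ Finset.HasAntidiagonal.antidiagonal r, ∑ b ∈ Finset.range N, ∑ i ∈ Finset.range N,
          g p.1 b (i + p.2) * c i p.2 := by
      intro r
      rw [Finset.sum_comm]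
      refine Finset.sum_congr rfl fun p _ => ?_
      refine sum_box N (fun b i => g p.1 b (i + p.2) * c i p.2) ?_
      intro b i h
      rw [g2 _ _ _ (by omega), zero_mul]
    simp only [e1]
    rw [sum_box N (fun a k => ∑ b ∈ Finset.range N, ∑ i ∈ Finset.range N,
          g a b (i + k) * c i k)]
    · refine Finset.sum_congr rfl fun a _ => ?_
      rw [Finset.sum_comm]
      refine Finset.sum_congr rfl fun b _ => ?_
      rw [Finset.sum_comm, ← sum_box N (fun i k => g a b (i + k) * c i k)]
      · have e2 : ∀ n, ∑ p ∈ Finset.HasAntidiagonal.antidiagonal n, g a b (p.1 + p.2) * c p.1 p.2 =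
            if n = 0 then g a b 0 else 0 := by
          intro n
          have : ∑ p ∈ Finset.HasAntidiagonal.antidiagonal n, g a b (p.1 + p.2) * c p.1 p.2 =
              g a b n * ∑ p ∈ Finset.HasAntidiagonal.antidiagonal n, c p.1 p.2 := by
            rw [Finset.mul_sum]
            refine Finset.sum_congr rfl fun p hp => ?_
            rw [Finset.HasAntidiagonal.mem_antidiagonal.1 hp]
          rw [this]
          simp only [hc]
          rw [alt_sum]
          split_ifs with h
          · rw [h, mul_one]
          · rw [mul_zero]
        simp only [e2]
        rw [Finset.sum_ite_eq' (Finset.range N) 0 (fun _ => g a b 0), if_pos]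
        simp; omega
      · intro i k h
        rw [g1 _ _ _ (by omega), zero_mul]
    · intro a k h
      refine Finset.sum_eq_zero fun b _ => Finset.sum_eq_zero fun i _ => ?_
      rw [g1 _ _ _ (by omega), zero_mul]
  simp only [step1]
  rw [step2]
  refine Finset.sum_congr rfl fun a _ => Finset.sum_congr rfl fun b _ => ?_
  simp only [hg, Nat.cast_zero, add_zero]
  field_simp

theorem restrict_sum (l₁ l₂ N : ℕ) (hN : l₁ + l₂ < N) (f : ℕ → ℕ → ℝ)
    (h1 : ∀ r s, l₁ < r → f r s = 0) (h2 : ∀ r s, l₂ < s → f r s = 0) :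
    ∑ r ∈ Finset.range N, ∑ s ∈ Finset.range N, f r s =
    ∑ r ∈ Finset.range (l₁ + 1), ∑ s ∈ Finset.range (l₂ + 1), f r s := by
  symm
  have : ∀ r, ∑ s ∈ Finset.range (l₂ + 1), f r s = ∑ s ∈ Finset.range N, f r s := by
    intro r
    refine Finset.sum_subset (fun x hx => ?_) (fun x _ hx => h2 _ _ ?_)
    · simp at hx ⊢; omega
    · simp at hx; omega
  simp only [this]
  refine Finset.sum_subset (fun x hx => ?_) (fun x _ hx => ?_)
  · simp at hx ⊢; omega
  · exact Finset.sum_eq_zero fun s _ => h1 _ _ (by simp at hx; omega)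

/-- `key_identity` with inverse factorials instead of descending factorials. -/
theorem key_identity' (E : ℝ) (l₁ l₂ : ℕ) (w : ℕ → ℝ) :
    ∑ r ∈ Finset.range (l₁ + 1), ∑ s ∈ Finset.range (l₂ + 1), (-1 : ℝ) ^ s *
      risingQ (E + r) s * risingQ (E + s) r * w (r + s) /
      (r.factorial * s.factorial * (l₁ - r).factorial * (l₂ - s).factorial) =
    ∑ r ∈ Finset.range (l₁ + 1), ∑ s ∈ Finset.range (l₂ + 1), (-1 : ℝ) ^ s *
      risingQ (E + l₁) s * risingQ (E + l₂) r * w (r + s) /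
      (r.factorial * s.factorial * (l₁ - r).factorial * (l₂ - s).factorial) := by
  have h := key_identity E l₁ l₂ (l₁ + l₂ + 1) (by omega) w
  rw [restrict_sum l₁ l₂ _ (by omega), restrict_sum l₁ l₂ _ (by omega)] at h
  · have hne : (l₁.factorial : ℝ) * l₂.factorial ≠ 0 := by positivity
    apply mul_left_cancel₀ hne
    simp only [Finset.mul_sum]
    refine Eq.trans ?_ (h.symm.trans ?_) <;>
    · refine Finset.sum_congr rfl fun r hr => Finset.sum_congr rfl fun s hs => ?_
      have d1 : ((l₁ - r).factorial : ℝ) * (l₁.descFactorial r : ℝ) = l₁.factorial := by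
        exact_mod_cast Nat.factorial_mul_descFactorial (by simp at hr; omega)
      have d2 : ((l₂ - s).factorial : ℝ) * (l₂.descFactorial s : ℝ) = l₂.factorial := by
        exact_mod_cast Nat.factorial_mul_descFactorial (by simp at hs; omega)
      rw [← d1, ← d2]
      field_simp
  all_goals
    intro r s h
    simp [Nat.descFactorial_eq_zero_iff_lt.2 h]

/-- The symmetric (Moyal) triple sum. -/
noncomputable def moyalT (E : ℝ) (l₁ l₂ l₃ : ℕ) : ℝ :=
  ∑ r ∈ Finset.range (l₁ + 1), ∑ s ∈ Finset.range (l₂ + 1), ∑ t ∈ Finset.range (l₃ + 1),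
    (-1 : ℝ) ^ s * risingQ (E + l₁) (s + (l₃ - t)) * risingQ (E + l₂) (r + t) *
      risingQ (E + l₃) ((l₁ - r) + (l₂ - s)) /
      (r.factorial * s.factorial * t.factorial *
        (l₁ - r).factorial * (l₂ - s).factorial * (l₃ - t).factorial)

/-- The bracket-form triple sum. -/
noncomputable def brG (E : ℝ) (l₁ l₂ l₃ : ℕ) : ℝ :=
  ∑ r ∈ Finset.range (l₁ + 1), ∑ s ∈ Finset.range (l₂ + 1), (-1 : ℝ) ^ s *
      risingQ (E + r) s * risingQ (E + s) r *
      (risingQ (E + l₃) (l₁ + l₂ - (r + s)) *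
        (risingQ (2 * E + l₁ + l₂ + (r + s : ℕ)) l₃ / l₃.factorial)) /
      (r.factorial * s.factorial * (l₁ - r).factorial * (l₂ - s).factorial)

theorem vand_range (x y z : ℝ) (n : ℕ) (hz : z = x + y) :
    risingQ z n / n.factorial = ∑ t ∈ Finset.range (n + 1),
      (risingQ x t / t.factorial) * (risingQ y (n - t) / (n - t).factorial) := by
  rw [hz, rising_vandermonde,
    Finset.Nat.sum_antidiagonal_eq_sum_range_succ
      (fun i j => (risingQ x i / i.factorial) * (risingQ y j / j.factorial))]

theorem brG_eq_moyalT (E : ℝ) (l₁ l₂ l₃ : ℕ) : brG E l₁ l₂ l₃ = moyalT E l₁ l₂ l₃ := by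
  unfold brG moyalT
  rw [key_identity' E l₁ l₂ (fun j => risingQ (E + l₃) (l₁ + l₂ - j) *
        (risingQ (2 * E + l₁ + l₂ + (j : ℕ)) l₃ / l₃.factorial))]
  refine Finset.sum_congr rfl fun r hr => Finset.sum_congr rfl fun s hs => ?_
  have hr' : r ≤ l₁ := by simp at hr; omega
  have hs' : s ≤ l₂ := by simp at hs; omega
  rw [vand_range (E + l₂ + r) (E + l₁ + s) _ l₃ (by push_cast; ring),
    Finset.mul_sum, Finset.mul_sum, Finset.sum_div]
  refine Finset.sum_congr rfl fun t _ => ?_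
  rw [risingQ_add (E + l₁), risingQ_add (E + l₂),
    show l₁ + l₂ - (r + s) = (l₁ - r) + (l₂ - s) by omega]
  field_simp

theorem moyalT_symm (E : ℝ) (l₁ l₂ l₃ : ℕ) :
    moyalT E l₁ l₂ l₃ = (-1) ^ l₂ * moyalT E l₃ l₂ l₁ := by
  unfold moyalT
  rw [Finset.sum_comm, Finset.sum_comm (s := Finset.range (l₃ + 1)), Finset.mul_sum,
    ← Finset.sum_range_reflect _ (l₂ + 1)]
  refine Finset.sum_congr rfl fun s hs => ?_
  have hs' : s ≤ l₂ := by simp at hs; omega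
  rw [Finset.sum_comm, Finset.mul_sum]
  refine Finset.sum_congr rfl fun t _ => ?_
  rw [Finset.mul_sum]
  refine Finset.sum_congr rfl fun r _ => ?_
  obtain ⟨u, rfl⟩ := Nat.exists_eq_add_of_le hs'
  rw [show s + u + 1 - 1 - s = u by omega, show s + u - u = s by omega,
    show s + u - s = u by omega, add_comm r t, add_comm (l₁ - r) s, add_comm u (l₃ - t), pow_add]
  have : ((-1 : ℝ)) ^ s * (-1) ^ s = 1 := by rw [← mul_pow]; simp
  linear_combination (-(-1 : ℝ) ^ u * risingQ (E + l₁) ((l₃ - t) + u) *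
    risingQ (E + ((s + u : ℕ) : ℝ)) (t + r) * risingQ (E + l₃) (s + (l₁ - r)) /
      (r.factorial * s.factorial * t.factorial *
        (l₁ - r).factorial * u.factorial * (l₃ - t).factorial)) * this

theorem lhs_eq (l₁ l₂ l₃ : ℕ) (E : ℝ) :
    ∑ r ∈ Finset.range (l₁ + 1), ∑ s ∈ Finset.range (l₂ + 1), ∑ t ∈ Finset.range (l₃ + 1),
      (-1 : ℝ) ^ (l₁ + l₂ - s) *
        gbinom (E + l₁ + s + l₃ - t - 1) (l₃ - t) *
        gbinom (E + r + s - 1) s *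
        gbinom (E + l₂ + r + t - 1) t *
        gbinom (E + r + s - 1) r *
        gbinom (E + l₁ - r + l₂ - s + l₃ - 1) (l₁ - r) *
        gbinom (E + l₃ + l₂ - s - 1) (l₂ - s) = (-1) ^ (l₁ + l₂) * brG E l₁ l₂ l₃ := by
  unfold brG
  rw [Finset.mul_sum]
  refine Finset.sum_congr rfl fun r hr => ?_
  rw [Finset.mul_sum]
  refine Finset.sum_congr rfl fun s hs => ?_
  have hr' : r ≤ l₁ := by simp at hr; omega
  have hs' : s ≤ l₂ := by simp at hs; omega
  rw [vand_range (E + l₂ + r) (E + l₁ + s) _ l₃ (by push_cast; ring),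
    Finset.mul_sum, Finset.mul_sum, Finset.sum_div, Finset.mul_sum]
  refine Finset.sum_congr rfl fun t ht => ?_
  have ht' : t ≤ l₃ := by simp at ht; omega
  rw [gbinom_rising (E + l₁ + s) _ (l₃ - t) (by push_cast [Nat.cast_sub ht']; ring),
    gbinom_rising (E + r) _ s (by ring),
    gbinom_rising (E + l₂ + r) _ t (by ring),
    gbinom_rising (E + s) _ r (by ring),
    gbinom_rising (E + l₃ + (l₂ - s : ℕ)) _ (l₁ - r)
      (by push_cast [Nat.cast_sub hr', Nat.cast_sub hs']; ring),
    gbinom_rising (E + l₃) _ (l₂ - s) (by push_cast [Nat.cast_sub hs']; ring),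
    show l₁ + l₂ - (r + s) = (l₂ - s) + (l₁ - r) by omega, risingQ_add]
  have : ((-1 : ℝ)) ^ (l₁ + l₂ - s) = (-1) ^ (l₁ + l₂) * (-1) ^ s := by
    rw [← pow_add, show l₁ + l₂ + s = (l₁ + l₂ - s) + 2 * s by omega, pow_add, pow_mul]
    simp
  rw [this]
  field_simp

theorem rhs_eq (l₁ l₂ l₃ : ℕ) (E : ℝ) :
    ∑ r ∈ Finset.range (l₁ + 1), ∑ s ∈ Finset.range (l₂ + 1), ∑ t ∈ Finset.range (l₃ + 1),
      (-1 : ℝ) ^ (l₁ + l₂ - s) *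
        gbinom (E + l₁ + s + l₃ - t - 1) (l₃ - t) *
        gbinom (E + l₁ + s - 1) s *
        gbinom (E + l₂ - s + t - 1) t *
        gbinom (E + l₂ + t + r - 1) r *
        gbinom (E + l₁ - r + l₂ - s + l₃ - 1) (l₁ - r) *
        gbinom (E + t + l₂ - s - 1) (l₂ - s) = (-1) ^ l₁ * brG E l₃ l₂ l₁ := by
  unfold brG
  rw [Finset.sum_comm, Finset.sum_comm (s := Finset.range (l₃ + 1)), Finset.mul_sum,
    ← Finset.sum_range_reflect _ (l₂ + 1)]
  refine Finset.sum_congr rfl fun s hs => ?_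
  have hs' : s ≤ l₂ := by simp at hs; omega
  rw [Finset.sum_comm, Finset.mul_sum]
  refine Finset.sum_congr rfl fun t ht => ?_
  have ht' : t ≤ l₃ := by simp at ht; omega
  obtain ⟨u, rfl⟩ := Nat.exists_eq_add_of_le hs'
  rw [vand_range (E + ((s + u : ℕ) : ℝ) + t) (E + s + l₃) _ l₁ (by push_cast; ring),
    Finset.mul_sum, Finset.mul_sum, Finset.sum_div, Finset.mul_sum]
  refine Finset.sum_congr rfl fun r hr => ?_
  have hr' : r ≤ l₁ := by simp at hr; omega
  rw [show s + u + 1 - 1 - s = u by omega, show s + u - u = s by omega,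
    show s + u - s = u by omega, show l₁ + (s + u) - u = l₁ + s by omega,
    gbinom_rising (E + l₁ + u) _ (l₃ - t) (by push_cast [Nat.cast_sub ht']; ring),
    gbinom_rising (E + l₁) _ u (by ring),
    gbinom_rising (E + s) _ t (by push_cast; ring),
    gbinom_rising (E + ((s + u : ℕ) : ℝ) + t) _ r (by ring),
    gbinom_rising (E + s + l₃) _ (l₁ - r)
      (by push_cast [Nat.cast_sub hr']; ring),
    gbinom_rising (E + t) _ s (by push_cast; ring),
    show l₃ + (s + u) - (t + s) = u + (l₃ - t) by omega, risingQ_add (E + l₁), pow_add]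
  field_simp

theorem eholzer_triple_sum_identity (l₁ l₂ l₃ : ℕ) (E : ℝ) :
    ∑ r ∈ Finset.range (l₁ + 1), ∑ s ∈ Finset.range (l₂ + 1), ∑ t ∈ Finset.range (l₃ + 1),
      (-1 : ℝ) ^ (l₁ + l₂ - s) *
        gbinom (E + l₁ + s + l₃ - t - 1) (l₃ - t) *
        gbinom (E + r + s - 1) s *
        gbinom (E + l₂ + r + t - 1) t *
        gbinom (E + r + s - 1) r *
        gbinom (E + l₁ - r + l₂ - s + l₃ - 1) (l₁ - r) *
        gbinom (E + l₃ + l₂ - s - 1) (l₂ - s)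
      =
    ∑ r ∈ Finset.range (l₁ + 1), ∑ s ∈ Finset.range (l₂ + 1), ∑ t ∈ Finset.range (l₃ + 1),
      (-1 : ℝ) ^ (l₁ + l₂ - s) *
        gbinom (E + l₁ + s + l₃ - t - 1) (l₃ - t) *
        gbinom (E + l₁ + s - 1) s *
        gbinom (E + l₂ - s + t - 1) t *
        gbinom (E + l₂ + t + r - 1) r *
        gbinom (E + l₁ - r + l₂ - s + l₃ - 1) (l₁ - r) *
        gbinom (E + t + l₂ - s - 1) (l₂ - s) := by
  rw [lhs_eq, rhs_eq, brG_eq_moyalT, brG_eq_moyalT, moyalT_symm, pow_add]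
  have : ((-1 : ℝ)) ^ l₂ * (-1) ^ l₂ = 1 := by rw [← mul_pow]; simp
  linear_combination ((-1 : ℝ) ^ l₁ * moyalT E l₃ l₂ l₁) * this
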